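/- arXiv:2506.03049 — 4 statements merged into one kernel-verified Lean document; each statement's English description precedes it below -/
import Mathlib

section
/- Let n ≥ 2 and let ℓ₁, …, ℓₙ be strictly positive real numbers. Fix an index i with 1 ≤ i ≤ n − 1, let Rᵢ denote the sublist (ℓ_{i+1}, …, ℓₙ), and set Pᵢ = ∑_{j=i+1}^{n} ℓⱼ. Define the modified list L′ = (ℓ′, …, ℓ′, ℓ_{i+1}, …, ℓₙ), in which the first i entries of L are all replaced by the single value ℓ′ = Pᵢ / exp(E(Rᵢ)). Then the persistence entropies satisfy E(L) ≤ E(L′). -/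
/-- The persistence entropy of a finite list of bar lengths:
`E(L) = -∑ⱼ pⱼ log pⱼ` where `pⱼ = ℓⱼ / S_L` and `S_L = ∑ⱼ ℓⱼ`. -/
noncomputable def persistenceEntropy (L : List ℝ) : ℝ :=
  -(L.map (fun x => x / L.sum * Real.log (x / L.sum))).sum

lemma pe_sum_aux (S : ℝ) (hS : 0 < S) (L : List ℝ) (hpos : ∀ x ∈ L, 0 < x) :
    (L.map (fun x => x / S * Real.log (x / S))).sum
      = (L.map (fun x => x * Real.log x)).sum / S - L.sum / S * Real.log S := by
  induction L with
  | nil => simp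
  | cons a t ih =>
    have ha : 0 < a := hpos a (by simp)
    simp only [List.map_cons, List.sum_cons]
    rw [ih (fun x hx => hpos x (by simp [hx])), Real.log_div ha.ne' hS.ne']
    ring

lemma pe_sum_pos (L : List ℝ) (hne : L ≠ []) (hpos : ∀ x ∈ L, 0 < x) : 0 < L.sum :=
  List.sum_pos L hpos hne

lemma pe_eq (L : List ℝ) (hne : L ≠ []) (hpos : ∀ x ∈ L, 0 < x) :
    persistenceEntropy L
      = Real.log L.sum - (L.map (fun x => x * Real.log x)).sum / L.sum := by
  have hS := pe_sum_pos L hne hpos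
  unfold persistenceEntropy
  rw [pe_sum_aux _ hS L hpos, div_self hS.ne']
  ring

lemma pe_gibbs (y : ℝ) (hy : 0 < y) (L : List ℝ) (hpos : ∀ x ∈ L, 0 < x) :
    L.sum * Real.log y + L.sum - L.length * y
      ≤ (L.map (fun x => x * Real.log x)).sum := by
  induction L with
  | nil => simp
  | cons a t ih =>
    have ha : 0 < a := hpos a (by simp)
    have h := ih (fun x hx => hpos x (by simp [hx]))
    simp only [List.map_cons, List.sum_cons, List.length_cons]
    push_cast
    have h1 := Real.log_le_sub_one_of_pos (div_pos hy ha)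
    rw [Real.log_div hy.ne' ha.ne'] at h1
    have h2 := mul_le_mul_of_nonneg_left h1 ha.le
    have h3 : a * (y / a - 1) = y - a := by field_simp
    rw [h3] at h2
    linarith

/-- Replacing the first `i` bars by the single value `Pᵢ / exp(E(Rᵢ))`, where
`Rᵢ` is the tail of the list and `Pᵢ` its total length, does not decrease the
persistence entropy. -/
theorem entropy_le_entropy_modified (n : ℕ) (hn : 2 ≤ n) (L : List ℝ)
    (hlen : L.length = n) (hpos : ∀ x ∈ L, 0 < x)
    (i : ℕ) (hi1 : 1 ≤ i) (hi2 : i ≤ n - 1) :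
    persistenceEntropy L ≤
      persistenceEntropy
        (List.replicate i ((L.drop i).sum / Real.exp (persistenceEntropy (L.drop i)))
          ++ L.drop i) := by
  have hLne : L ≠ [] := by
    rintro rfl
    simp at hlen
    omega
  have hRlen : (L.drop i).length = n - i := by simp [hlen]
  have hHlen : (L.take i).length = i := by simp [hlen]; omega
  have hRpos : ∀ x ∈ L.drop i, 0 < x := fun x hx => hpos x (List.mem_of_mem_drop hx)
  have hHpos : ∀ x ∈ L.take i, 0 < x := fun x hx => hpos x (List.mem_of_mem_take hx)
  have hLsum : L.sum = (L.take i).sum + (L.drop i).sum := by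
    rw [← List.sum_append, List.take_append_drop]
  have hLf : (L.map (fun x => x * Real.log x)).sum
      = ((L.take i).map (fun x => x * Real.log x)).sum
        + ((L.drop i).map (fun x => x * Real.log x)).sum := by
    rw [← List.sum_append, ← List.map_append, List.take_append_drop]
  have hS := pe_sum_pos L hLne hpos
  rw [pe_eq L hLne hpos, hLf]
  generalize L.drop i = R at *
  generalize L.take i = K at *
  have hRne : R ≠ [] := by
    rintro rfl
    simp at hRlen
    omega
  have hP := pe_sum_pos R hRne hRpos
  set a := R.sum / Real.exp (persistenceEntropy R) with ha
  have hapos : 0 < a := by positivity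
  have hloga : Real.log a * R.sum = (R.map (fun x => x * Real.log x)).sum := by
    rw [ha, Real.log_div hP.ne' (Real.exp_pos _).ne', Real.log_exp, pe_eq R hRne hRpos]
    field_simp
    ring
  rw [pe_eq (List.replicate i a ++ R) (by simp [hRne]) (by
    intro x hx
    rcases List.mem_append.1 hx with h | h
    · rw [List.eq_of_mem_replicate h]; exact hapos
    · exact hRpos x h)]
  simp only [List.map_append, List.map_replicate, List.sum_append, List.sum_replicate,
    nsmul_eq_mul]
  rw [← hloga]
  have hS' : 0 < (i : ℝ) * a + R.sum := by positivity
  have e1 : ((i : ℝ) * (a * Real.log a) + Real.log a * R.sum) / (i * a + R.sum)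
      = Real.log a := by
    field_simp
  rw [e1]
  have hg := pe_gibbs (a * (L.sum / (i * a + R.sum))) (by positivity) K hHpos
  rw [hHlen, Real.log_mul hapos.ne' (by positivity)] at hg
  have ht := Real.log_le_sub_one_of_pos (div_pos hS hS')
  have ht2 := mul_le_mul_of_nonneg_left ht hP.le
  rw [Real.log_div hS.ne' hS'.ne'] at hg ht2
  have hc : (i * a + R.sum) * (L.sum / (i * a + R.sum)) = L.sum := by field_simp
  have key : L.sum * (Real.log a + Real.log L.sum - Real.log (i * a + R.sum))
      ≤ (K.map (fun x => x * Real.log x)).sum + Real.log a * R.sum := by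
    have e2 : L.sum * (Real.log a + Real.log L.sum - Real.log (i * a + R.sum))
      = K.sum * (Real.log a + (Real.log L.sum - Real.log (i * a + R.sum)))
        + R.sum * (Real.log L.sum - Real.log (i * a + R.sum)) + Real.log a * R.sum := by
      linear_combination
        (Real.log a + Real.log L.sum - Real.log (i * a + R.sum)) * hLsum
    rw [e2]
    linarith
  have := (le_div_iff₀' hS).2 key
  linarith
end

section
/- Let n ≥ 1 and let ℓ₁, …, ℓₙ be strictly positive real numbers with total length P = ∑_{j=1}^{n} ℓⱼ and persistence entropy R = E(ℓ₁, …, ℓₙ). Then for every real number ℓ₀ > 0, the persistence entropy of the augmented list obtained by adding one extra bar of length ℓ₀ satisfies E(ℓ₀, ℓ₁, …, ℓₙ) ≤ E(P / exp(R), ℓ₁, …, ℓₙ). In other words, among all possible lengths of a single additional bar, the persistence entropy of the augmented barcode is maximized when the additional bar has length P / exp(R). -/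
theorem entropy_aux (S : ℝ) (hS : 0 < S) (L : List ℝ) (hpos : ∀ x ∈ L, 0 < x) :
    (L.map (fun x => x / S * Real.log (x / S))).sum =
      ((L.map (fun x => x * Real.log x)).sum - L.sum * Real.log S) / S := by
  induction L with
  | nil => simp
  | cons a t ih =>
    have ha : 0 < a := hpos a (by simp)
    have ih' := ih (fun x hx => hpos x (by simp [hx]))
    simp only [List.map_cons, List.sum_cons]
    rw [ih', Real.log_div ha.ne' hS.ne']
    field_simp
    ring

theorem entropy_cons (a : ℝ) (ha : 0 < a) (L : List ℝ) (hpos : ∀ x ∈ L, 0 < x)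
    (hP : 0 < L.sum) :
    persistenceEntropy (a :: L) = Real.log (a + L.sum) -
      (a * Real.log a + L.sum * (Real.log L.sum - persistenceEntropy L)) / (a + L.sum) := by
  have h1 := entropy_aux L.sum hP L hpos
  have hS : 0 < a + L.sum := by positivity
  have h2 := entropy_aux (a + L.sum) hS (a :: L) (by
    intro x hx
    rcases List.mem_cons.1 hx with h | h
    · rw [h]; exact ha
    · exact hpos x h)
  have e1 : persistenceEntropy L = -((L.map (fun x => x * Real.log x)).sum
      - L.sum * Real.log L.sum) / L.sum := by
    unfold persistenceEntropy
    rw [h1]; ring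
  have e2 : persistenceEntropy (a :: L) = -((a * Real.log a
      + (L.map (fun x => x * Real.log x)).sum) - (a + L.sum) * Real.log (a + L.sum))
        / (a + L.sum) := by
    unfold persistenceEntropy
    rw [List.sum_cons, h2, List.map_cons, List.sum_cons, List.sum_cons]; ring
  rw [e2, e1]
  field_simp
  ring

theorem entropy_ineq (a b P : ℝ) (ha : 0 < a) (hb : 0 < b) (hP : 0 < P) :
    Real.log (a + P) - (a * Real.log a + P * Real.log b) / (a + P) ≤
      Real.log (b + P) - (b * Real.log b + P * Real.log b) / (b + P) := by
  have hA : 0 < a + P := by positivity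
  have hB : 0 < b + P := by positivity
  have e : (b * Real.log b + P * Real.log b) / (b + P) = Real.log b := by
    field_simp
  rw [e, sub_le_iff_le_add, ← sub_le_iff_le_add', le_div_iff₀ hA]
  have h1 := Real.log_le_sub_one_of_pos (x := (b * (a + P)) / (a * (b + P))) (by positivity)
  have h2 := Real.log_le_sub_one_of_pos (x := (a + P) / (b + P)) (by positivity)
  rw [Real.log_div (by positivity) (by positivity), Real.log_mul hb.ne' hA.ne',
    Real.log_mul ha.ne' hB.ne'] at h1
  rw [Real.log_div hA.ne' hB.ne'] at h2
  have h3 := mul_le_mul_of_nonneg_left h1 ha.le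
  have h4 := mul_le_mul_of_nonneg_left h2 hP.le
  have h5 : a * (b * (a + P) / (a * (b + P)) - 1) + P * ((a + P) / (b + P) - 1) = 0 := by
    field_simp
    ring
  nlinarith

/-- Among all possible lengths of a single additional bar, the persistence
entropy of the augmented barcode is maximized when the additional bar has
length `P / exp(R)`, where `P` is the total length and `R` the persistence
entropy of the original barcode. -/
theorem entropy_add_bar_le (n : ℕ) (hn : 1 ≤ n) (L : List ℝ)
    (hlen : L.length = n) (hpos : ∀ x ∈ L, 0 < x)
    (ℓ₀ : ℝ) (hℓ₀ : 0 < ℓ₀) :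
    persistenceEntropy (ℓ₀ :: L) ≤
      persistenceEntropy ((L.sum / Real.exp (persistenceEntropy L)) :: L) := by
  have hne : L ≠ [] := by
    rintro rfl
    simp at hlen
    omega
  have hP : 0 < L.sum := List.sum_pos L hpos hne
  have hb : 0 < L.sum / Real.exp (persistenceEntropy L) := by positivity
  have hlog : Real.log L.sum - persistenceEntropy L =
      Real.log (L.sum / Real.exp (persistenceEntropy L)) := by
    rw [Real.log_div hP.ne' (Real.exp_pos _).ne', Real.log_exp]
  rw [entropy_cons _ hℓ₀ L hpos hP, entropy_cons _ hb L hpos hP, hlog]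
  exact entropy_ineq _ _ _ hℓ₀ hb hP
end

section
/- Let n ≥ 2 and let ℓ₁, …, ℓₙ be strictly positive real numbers. Fix an index i with 1 ≤ i ≤ n − 1, let Rᵢ denote the sublist (ℓ_{i+1}, …, ℓₙ), set Pᵢ = ∑_{j=i+1}^{n} ℓⱼ, and let L′ = (ℓ′, …, ℓ′, ℓ_{i+1}, …, ℓₙ) be the list in which the first i entries are all replaced by ℓ′ = Pᵢ / exp(E(Rᵢ)). Then the persistence entropy of the modified list admits the closed form E(L′) = log(i + exp(E(Rᵢ))). -/
/-- Rewriting of the entropy summands with a common normalisation `S`. -/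
theorem sum_map_div_mul_log (S : ℝ) (hS : 0 < S) (R : List ℝ) (hR : ∀ x ∈ R, 0 < x) :
    (R.map (fun x => x / S * Real.log (x / S))).sum
      = ((R.map (fun x => x * Real.log x)).sum - R.sum * Real.log S) / S := by
  induction R with
  | nil => simp
  | cons a t ih =>
    have ha : 0 < a := hR a (by simp)
    have ih' := ih (fun x hx => hR x (by simp [hx]))
    simp only [List.map_cons, List.sum_cons]
    rw [ih', Real.log_div ha.ne' hS.ne']
    ring

/-- Closed form of the entropy of a list of positive numbers. -/
theorem persistenceEntropy_eq (R : List ℝ) (hR : ∀ x ∈ R, 0 < x) (hS : 0 < R.sum) :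
    persistenceEntropy R
      = Real.log R.sum - (R.map (fun x => x * Real.log x)).sum / R.sum := by
  unfold persistenceEntropy
  rw [sum_map_div_mul_log _ hS R hR]
  field_simp
  ring

/-- The persistence entropy of the list obtained by replacing the first `i`
bars by the single value `Pᵢ / exp(E(Rᵢ))` admits the closed form
`log (i + exp (E(Rᵢ)))`, where `Rᵢ` is the tail of the list. -/
theorem entropy_modified_eq (n : ℕ) (hn : 2 ≤ n) (L : List ℝ)
    (hlen : L.length = n) (hpos : ∀ x ∈ L, 0 < x)
    (i : ℕ) (hi1 : 1 ≤ i) (hi2 : i ≤ n - 1) :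
    persistenceEntropy
        (List.replicate i ((L.drop i).sum / Real.exp (persistenceEntropy (L.drop i)))
          ++ L.drop i)
      = Real.log (i + Real.exp (persistenceEntropy (L.drop i))) := by
  have hRpos : ∀ x ∈ L.drop i, 0 < x := fun x hx => hpos x (List.mem_of_mem_drop hx)
  have hne : L.drop i ≠ [] := by
    intro h
    rw [List.drop_eq_nil_iff] at h
    omega
  generalize L.drop i = R at hRpos hne ⊢
  have hP : 0 < R.sum := List.sum_pos R hRpos hne
  have hE := persistenceEntropy_eq R hRpos hP
  generalize persistenceEntropy R = e at hE ⊢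
  have hQ := Real.exp_pos e
  have hl : 0 < R.sum / Real.exp e := div_pos hP hQ
  have hiQ : 0 < (i : ℝ) + Real.exp e := by positivity
  have hlog : Real.log (R.sum / Real.exp e) = Real.log R.sum - e := by
    rw [Real.log_div hP.ne' hQ.ne', Real.log_exp]
  have hsum : (List.replicate i (R.sum / Real.exp e) ++ R).sum
      = R.sum / Real.exp e * (i + Real.exp e) := by
    rw [List.sum_append, List.sum_replicate, nsmul_eq_mul]
    field_simp
  have hA : (R.map (fun x => x * Real.log x)).sum = R.sum * (Real.log R.sum - e) := by
    rw [hE]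
    field_simp
    ring
  rw [persistenceEntropy_eq, hsum, Real.log_mul hl.ne' hiQ.ne', List.map_append,
    List.sum_append, List.map_replicate, List.sum_replicate, nsmul_eq_mul, hA, hlog]
  · field_simp
    ring
  · intro x hx
    rcases List.mem_append.1 hx with h | h
    · rw [List.eq_of_mem_replicate h]
      exact hl
    · exact hRpos x h
  · rw [hsum]
    positivity
end

section
/- Let n ≥ 2 and let ℓ₁, …, ℓₙ be strictly positive real numbers. Then for every index i with 1 ≤ i ≤ n − 1, the persistence entropy of the full list is bounded above in terms of the entropy of the tail: E(ℓ₁, …, ℓₙ) ≤ log(i + exp(E(ℓ_{i+1}, …, ℓₙ))). -/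
lemma gibbs_aux (p q : ℝ) (hp : 0 < p) (hq : 0 < q) :
    -(p * Real.log p) ≤ -(p * Real.log q) + q - p := by
  have h := Real.log_le_sub_one_of_pos (div_pos hq hp)
  rw [Real.log_div hq.ne' hp.ne'] at h
  have h2 := mul_le_mul_of_nonneg_left h hp.le
  have h3 : p * (q / p - 1) = q - p := by field_simp
  rw [h3] at h2
  linarith

lemma prefix_aux (S Z : ℝ) (hS : 0 < S) (hZ : 0 < Z) (A : List ℝ) (hA : ∀ x ∈ A, 0 < x) :
    -(A.map (fun x => x / S * Real.log (x / S))).sum ≤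
      A.sum / S * Real.log Z + A.length / Z - A.sum / S := by
  induction A with
  | nil => simp
  | cons a A ih =>
    have h1 := ih (fun x hx => hA x (List.mem_cons_of_mem _ hx))
    have h2 := gibbs_aux (a / S) (Z⁻¹) (div_pos (hA a List.mem_cons_self) hS) (inv_pos.2 hZ)
    rw [Real.log_inv] at h2
    simp only [List.map_cons, List.sum_cons, List.length_cons, Nat.cast_add, Nat.cast_one,
      add_div, add_mul, one_div]
    linarith

lemma tail_aux (S T : ℝ) (hS : 0 < S) (hT : 0 < T) (B : List ℝ) (hB : ∀ x ∈ B, 0 < x) :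
    (B.map (fun x => x / S * Real.log (x / S))).sum =
      T / S * (B.map (fun x => x / T * Real.log (x / T))).sum + B.sum / S * Real.log (T / S) := by
  induction B with
  | nil => simp
  | cons a B ih =>
    have h1 := ih (fun x hx => hB x (List.mem_cons_of_mem _ hx))
    have ha := hB a List.mem_cons_self
    simp only [List.map_cons, List.sum_cons]
    rw [h1, Real.log_div ha.ne' hS.ne', Real.log_div ha.ne' hT.ne', Real.log_div hT.ne' hS.ne']
    field_simp
    ring

/-- The persistence entropy of the full list is bounded above in terms of the
entropy of the tail: `E(L) ≤ log (i + exp (E(ℓ_{i+1}, …, ℓₙ)))`. -/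
theorem entropy_le_log_add_exp_tail (n : ℕ) (hn : 2 ≤ n) (L : List ℝ)
    (hlen : L.length = n) (hpos : ∀ x ∈ L, 0 < x)
    (i : ℕ) (hi1 : 1 ≤ i) (hi2 : i ≤ n - 1) :
    persistenceEntropy L ≤
      Real.log (i + Real.exp (persistenceEntropy (L.drop i))) := by
  have hA : ∀ x ∈ L.take i, 0 < x := fun x hx => hpos x (List.mem_of_mem_take hx)
  have hB : ∀ x ∈ L.drop i, 0 < x := fun x hx => hpos x (List.mem_of_mem_drop hx)
  have hlA : (L.take i).length = i := by rw [List.length_take]; omega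
  have hT : 0 < (L.drop i).sum := by
    apply List.sum_pos _ hB
    intro h
    have := congrArg List.length h
    simp at this
    omega
  have hS : 0 < L.sum := by
    apply List.sum_pos _ hpos
    rintro rfl
    simp at hlen
    omega
  have hsum : L.sum = (L.take i).sum + (L.drop i).sum := (List.sum_take_add_sum_drop L i).symm
  have hE : persistenceEntropy (L.drop i) = -((L.drop i).map
    (fun x => x / (L.drop i).sum * Real.log (x / (L.drop i).sum))).sum := rfl
  have hL : persistenceEntropy L = -((L.take i).map (fun x => x / L.sum * Real.log (x / L.sum))).sum
      - ((L.drop i).map (fun x => x / L.sum * Real.log (x / L.sum))).sum := by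
    have : (L.map (fun x => x / L.sum * Real.log (x / L.sum))).sum =
        ((L.take i).map (fun x => x / L.sum * Real.log (x / L.sum))).sum
        + ((L.drop i).map (fun x => x / L.sum * Real.log (x / L.sum))).sum := by
      rw [← List.sum_append, ← List.map_append, List.take_append_drop]
    rw [persistenceEntropy, this]; ring
  have htail := tail_aux L.sum (L.drop i).sum hS hT (L.drop i) hB
  set E := persistenceEntropy (L.drop i)
  have hZ : 0 < (i : ℝ) + Real.exp E := by positivity
  have hpre := prefix_aux L.sum _ hS hZ (L.take i) hA
  rw [hlA] at hpre
  have hg := gibbs_aux ((L.drop i).sum / L.sum) (Real.exp E / (i + Real.exp E))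
    (div_pos hT hS) (by positivity)
  rw [Real.log_div (Real.exp_pos E).ne' hZ.ne', Real.log_exp] at hg
  have h1 : (L.take i).sum / L.sum + (L.drop i).sum / L.sum = 1 := by
    rw [← add_div, ← hsum, div_self hS.ne']
  have h2 : (i : ℝ) / (i + Real.exp E) + Real.exp E / (i + Real.exp E) = 1 := by
    rw [← add_div, div_self hZ.ne']
  rw [hL, htail, ← neg_eq_iff_eq_neg.2 hE]
  have h3 : (L.take i).sum / L.sum = 1 - (L.drop i).sum / L.sum := by linarith
  rw [h3] at hpre
  linarith
end
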